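/- Let m, n ≥ 1 and let Ψ : ℤ^m → [0,∞) be a non-negative function. Then the mn-dimensional Lebesgue measure of the linear forms multiplicative set with coprimality D^×_{m,n}(Ψ) is either 0 or 1. -/

import Mathlib

open MeasureTheory Filter

/-- The multiplicative linear forms set with coprimality `D^×_{m,n}(Ψ)`: the set
of `X ∈ [0,1]^{mn}`, viewed as an `m × n` real matrix, such that
`∏ᵢ |(qX)ᵢ + pᵢ| < Ψ(q)` for infinitely many pairs
`(p, q) ∈ ℤ^n × (ℤ^m \ {0})` with `gcd(pᵢ, q) = 1` for all `i`, i.e. `pᵢ`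
together with the coordinates of `q` have greatest common divisor 1. -/
def DmulLF (m n : ℕ) (Ψ : (Fin m → ℤ) → ℝ) : Set (Fin m → Fin n → ℝ) :=
  {X | (∀ j i, X j i ∈ Set.Icc (0 : ℝ) 1) ∧
    {pq : (Fin n → ℤ) × (Fin m → ℤ) | pq.2 ≠ 0 ∧
      (∀ i, Int.gcd (pq.1 i) (Finset.univ.gcd fun j => pq.2 j) = 1) ∧
      ∏ i, |(∑ j, (pq.2 j : ℝ) * X j i) + (pq.1 i : ℝ)| < Ψ pq.2}.Infinite}


open Topology Metric in
/-- A measurable set which is a.e. invariant under a dense set of translations is null or conull. -/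
lemma zol_dense {E : Type*} [NormedAddCommGroup E] [NormedSpace ℝ E] [FiniteDimensional ℝ E]
    [MeasurableSpace E] [BorelSpace E] (μ : Measure E) [μ.IsAddHaarMeasure]
    {F : Set E} (hF : MeasurableSet F)
    (hd : Dense {v : E | ∀ᵐ x ∂μ, x ∈ F → x + v ∈ F}) :
    μ F = 0 ∨ μ Fᶜ = 0 := by
  by_contra! hcon
  obtain ⟨h1, h2⟩ := hcon
  have hae := Besicovitch.ae_tendsto_measure_inter_div_of_measurableSet μ hF
  obtain ⟨x, hxF, hx⟩ : ∃ x ∈ F, Tendsto (fun r => μ (F ∩ closedBall x r) / μ (closedBall x r))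
      (𝓝[>] 0) (𝓝 (F.indicator 1 x)) := by
    by_contra! h
    refine h1 (measure_mono_null ?_ hae)
    intro x hx hx'
    exact h x hx hx'
  obtain ⟨y, hyF, hy⟩ : ∃ x ∈ Fᶜ, Tendsto (fun r => μ (F ∩ closedBall x r) / μ (closedBall x r))
      (𝓝[>] 0) (𝓝 (F.indicator 1 x)) := by
    by_contra! h
    refine h2 (measure_mono_null ?_ hae)
    intro x hx hx'
    exact h x hx hx'
  rw [Set.indicator_of_mem hxF] at hx
  rw [Set.indicator_of_notMem hyF] at hy
  have h2r : Tendsto (fun r : ℝ => 2 * r) (𝓝[>] 0) (𝓝[>] 0) := by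
    refine tendsto_nhdsWithin_iff.2 ⟨?_, ?_⟩
    · have : Tendsto (fun r : ℝ => 2 * r) (𝓝 0) (𝓝 (2 * 0)) := by
        exact tendsto_id.const_mul 2
      rw [mul_zero] at this
      exact this.mono_left nhdsWithin_le_nhds
    · filter_upwards [self_mem_nhdsWithin] with r hr
      simpa using hr
  have hy2 := hy.comp h2r
  set C : ENNReal := ENNReal.ofReal ((2 : ℝ) ^ Module.finrank ℝ E) with hC
  have hy3 : Tendsto (fun r : ℝ => C * (μ (F ∩ closedBall y (2 * r)) / μ (closedBall y (2 * r))))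
      (𝓝[>] 0) (𝓝 0) := by
    have := ENNReal.Tendsto.const_mul (a := C) hy2 (Or.inr ENNReal.ofReal_ne_top)
    simpa [Function.comp_def] using this
  have hle : ∀ᶠ r : ℝ in 𝓝[>] 0, μ (F ∩ closedBall x r) / μ (closedBall x r) ≤
      C * (μ (F ∩ closedBall y (2 * r)) / μ (closedBall y (2 * r))) := by
    filter_upwards [self_mem_nhdsWithin] with r hr
    have hr : 0 < r := hr
    obtain ⟨v, hv, hvr⟩ := hd.exists_dist_lt (y - x) hr
    have hm : μ (F ∩ closedBall x r) ≤ μ (F ∩ closedBall y (2 * r)) := by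
      rw [← measure_preimage_add_right μ v (F ∩ closedBall y (2 * r))]
      refine measure_mono_ae ?_
      filter_upwards [hv] with z hz hz'
      refine ⟨hz hz'.1, ?_⟩
      have h3 : dist z x ≤ r := hz'.2
      rw [mem_closedBall, dist_eq_norm]
      rw [dist_eq_norm] at h3 hvr
      have : z + v - y = (z - x) - (y - x - v) := by abel
      rw [this]
      calc _ ≤ _ := norm_sub_le _ _
        _ ≤ _ := by linarith
    have hb : μ (closedBall y (2 * r)) = C * μ (closedBall x r) := by
      rw [Measure.addHaar_closedBall_mul_of_pos μ y two_pos, Measure.addHaar_closedBall_center μ x]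
    have hC0 : C ≠ 0 := by simp [hC]
    have hCt : C ≠ ⊤ := ENNReal.ofReal_ne_top
    rw [hb, ← mul_div_assoc, ENNReal.mul_div_mul_left _ _ hC0 hCt]
    exact ENNReal.div_le_div_right hm _
  have := le_of_tendsto_of_tendsto hx hy3 hle
  simp at this

open Topology Metric in
/-- A periodic set which is mapped into itself by expanding affine maps is null or conull. -/
lemma zol_expand {m : ℕ} {F : Set (Fin m → ℝ)} (hF : MeasurableSet F)
    (hper : ∀ (z : Fin m → ℤ), ∀ x ∈ F, x + (fun j => (z j : ℝ)) ∈ F)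
    (l : ℝ) (hl : 1 < l) (w : Fin m → ℝ) (hT : ∀ x ∈ F, l • x + w ∈ F) :
    volume F = 0 ∨ volume Fᶜ = 0 := by
  by_cases h1 : volume F = 0
  · exact Or.inl h1
  right
  have hl0 : 0 < l := by linarith
  have hiter : ∀ k : ℕ, ∃ w : Fin m → ℝ, ∀ x ∈ F, l ^ k • x + w ∈ F := by
    intro k
    induction k with
    | zero => exact ⟨0, by simp⟩
    | succ k ih =>
      obtain ⟨u, hu⟩ := ih
      refine ⟨l • u + w, fun x hx => ?_⟩
      have := hT _ (hu x hx)
      convert this using 1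
      rw [smul_add, smul_smul, pow_succ', add_assoc]
  have hper' : ∀ (z : Fin m → ℤ), ∀ x, x ∈ F ↔ x + (fun j => (z j : ℝ)) ∈ F := by
    intro z x
    refine ⟨hper z x, fun h => ?_⟩
    have := hper (-z) _ h
    convert this using 1
    ext j
    simp
  have hae := Besicovitch.ae_tendsto_measure_inter_div_of_measurableSet volume hF.compl
  obtain ⟨x, hxF, hx⟩ : ∃ x ∈ F, Tendsto (fun r => volume (Fᶜ ∩ closedBall x r) /
      volume (closedBall x r)) (𝓝[>] 0) (𝓝 (Fᶜ.indicator 1 x)) := by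
    by_contra! h
    refine h1 (measure_mono_null ?_ hae)
    intro x hx hx'
    exact h x hx hx'
  rw [Set.indicator_of_notMem (by simpa using hxF)] at hx
  have hk : Tendsto (fun k : ℕ => (l ^ k)⁻¹) atTop (𝓝[>] 0) := by
    refine tendsto_nhdsWithin_iff.2 ⟨?_, ?_⟩
    · exact (tendsto_pow_atTop_atTop_of_one_lt hl).inv_tendsto_atTop
    · filter_upwards with k
      simp only [Set.mem_Ioi]
      positivity
  have hx2 := hx.comp hk
  set B : ENNReal := volume (closedBall (0 : Fin m → ℝ) 1)
  have hBt : B ≠ ⊤ := measure_closedBall_lt_top.ne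
  have hB0 : B ≠ 0 := (measure_closedBall_pos volume _ one_pos).ne'
  have hx3 : Tendsto (fun k : ℕ => (volume (Fᶜ ∩ closedBall x (l ^ k)⁻¹) /
      volume (closedBall x (l ^ k)⁻¹)) * B) atTop (𝓝 0) := by
    have := ENNReal.Tendsto.mul_const (b := B) hx2 (Or.inr hBt)
    simpa [Function.comp_def] using this
  have hle : ∀ k : ℕ, volume (Fᶜ ∩ closedBall (0 : Fin m → ℝ) (1/2)) ≤
      (volume (Fᶜ ∩ closedBall x (l ^ k)⁻¹) / volume (closedBall x (l ^ k)⁻¹)) * B := by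
    intro k
    obtain ⟨u, hu⟩ := hiter k
    have hlk : 0 < l ^ k := by positivity
    set y := l ^ k • x + u with hy
    set z : Fin m → ℤ := fun j => round (y j)
    have e1 : volume (Fᶜ ∩ closedBall (0 : Fin m → ℝ) (1/2)) ≤ volume (Fᶜ ∩ closedBall y 1) := by
      rw [← measure_preimage_add_right volume (fun j => (z j : ℝ)) (Fᶜ ∩ closedBall y 1)]
      refine measure_mono ?_
      rintro a ⟨ha1, ha2⟩
      refine ⟨fun h => ha1 ((hper' z a).2 h), ?_⟩
      rw [mem_closedBall, dist_pi_le_iff (by norm_num)] at ha2 ⊢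
      intro j
      have h3 := ha2 j
      have h4 := abs_sub_round (y j)
      rw [Real.dist_eq] at h3 ⊢
      simp only [Pi.zero_apply, sub_zero, Pi.add_apply, z] at h3 ⊢
      rw [abs_le] at *
      constructor <;> linarith [h3.1, h3.2, h4.1, h4.2]
    have e2 : (fun a => l ^ k • a) ⁻¹' ((fun a => a + u) ⁻¹' (Fᶜ ∩ closedBall y 1)) ⊆
        Fᶜ ∩ closedBall x (l ^ k)⁻¹ := by
      rintro a ⟨ha1, ha2⟩
      refine ⟨fun h => ha1 (hu a h), ?_⟩
      rw [mem_closedBall, dist_eq_norm] at ha2 ⊢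
      have : l ^ k • a + u - y = l ^ k • (a - x) := by
        rw [hy, smul_sub]; abel
      simp only [] at ha2
      rw [this, norm_smul, Real.norm_of_nonneg hlk.le] at ha2
      rw [← one_div, le_div_iff₀ hlk]
      linarith
    have e3 := measure_mono (μ := volume) e2
    rw [Measure.addHaar_preimage_smul volume hlk.ne', measure_preimage_add_right] at e3
    have e4 : volume (closedBall x (l ^ k)⁻¹) =
        ENNReal.ofReal (abs ((l ^ k) ^ Module.finrank ℝ (Fin m → ℝ))⁻¹) * B := by
      rw [Measure.addHaar_closedBall' volume x (by positivity)]
      congr 2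
      rw [abs_of_nonneg (by positivity), inv_pow]
    set c := ENNReal.ofReal (abs ((l ^ k) ^ Module.finrank ℝ (Fin m → ℝ))⁻¹) with hc
    have hc0 : c ≠ 0 := by
      rw [hc]
      simp only [ne_eq, ENNReal.ofReal_eq_zero, not_le]
      positivity
    have hct : c ≠ ⊤ := ENNReal.ofReal_ne_top
    refine e1.trans ?_
    rw [e4]
    calc volume (Fᶜ ∩ closedBall y 1) = (c * volume (Fᶜ ∩ closedBall y 1)) / (c * B) * B := by
          rw [ENNReal.mul_div_mul_left _ _ hc0 hct, ENNReal.div_mul_cancel hB0 hBt]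
      _ ≤ _ := by gcongr
  have h0 : volume (Fᶜ ∩ closedBall (0 : Fin m → ℝ) (1/2)) = 0 := by
    have := ge_of_tendsto' hx3 hle
    simpa using this
  have hcov : Fᶜ ⊆ ⋃ z : Fin m → ℤ, (fun a => a + (fun j => (z j : ℝ))) ⁻¹'
      (Fᶜ ∩ closedBall (0 : Fin m → ℝ) (1/2)) := by
    intro a ha
    refine Set.mem_iUnion.2 ⟨fun j => - round (a j), fun h => ha ((hper' _ a).2 h), ?_⟩
    rw [mem_closedBall, dist_pi_le_iff (by norm_num)]
    intro j
    have h4 := abs_sub_round (a j)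
    rw [Real.dist_eq]
    simpa [← sub_eq_add_neg] using h4
  refine measure_mono_null hcov (measure_iUnion_null fun z => ?_)
  rw [measure_preimage_add_right, h0]

/-- Coprimality of `p` with the vector `q`. -/
def ZCop {m : ℕ} (p : ℤ) (q : Fin m → ℤ) : Prop :=
  Int.gcd p (Finset.univ.gcd fun j => q j) = 1

lemma zcop_iff {m : ℕ} (p : ℤ) (q : Fin m → ℤ) :
    ZCop p q ↔ ∀ r : ℕ, r.Prime → (r : ℤ) ∣ p → ∃ j, ¬ (r : ℤ) ∣ q j := by
  unfold ZCop
  constructor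
  · intro h r hr hrp
    by_contra! hc
    have h1 : (r : ℤ) ∣ (Finset.univ.gcd fun j => q j) := Finset.dvd_gcd fun j _ => hc j
    have h2 : (r : ℤ) ∣ (Int.gcd p (Finset.univ.gcd fun j => q j) : ℤ) := Int.dvd_coe_gcd hrp h1
    rw [h] at h2
    have : r ∣ 1 := by exact_mod_cast h2
    exact hr.one_lt.ne' (Nat.dvd_one.1 this)
  · intro h
    by_contra hc
    obtain ⟨r, hr, hrd⟩ := Nat.exists_prime_and_dvd hc
    have hrd' : (r : ℤ) ∣ (Int.gcd p (Finset.univ.gcd fun j => q j) : ℤ) := by exact_mod_cast hrd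
    obtain ⟨j, hj⟩ := h r hr (hrd'.trans (Int.gcd_dvd_left _ _))
    exact hj ((hrd'.trans (Int.gcd_dvd_right _ _)).trans (Finset.gcd_dvd (Finset.mem_univ j)))

/-- The `ℓ¹` norm of an integer vector. -/
def zN {m : ℕ} (q : Fin m → ℤ) : ℝ := ∑ j, |(q j : ℝ)|

lemma zN_pos {m : ℕ} {q : Fin m → ℤ} (hq : q ≠ 0) : 0 < zN q := by
  obtain ⟨j, hj⟩ := Function.ne_iff.1 hq
  refine Finset.sum_pos' (fun i _ => abs_nonneg _) ⟨j, Finset.mem_univ j, ?_⟩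
  simpa using hj

lemma abs_le_zN {m : ℕ} (q : Fin m → ℤ) (j : Fin m) : |(q j : ℝ)| ≤ zN q :=
  Finset.single_le_sum (f := fun j => |(q j : ℝ)|) (fun i _ => abs_nonneg _) (Finset.mem_univ j)

lemma zN_large {m : ℕ} (B : ℝ) : ∀ᶠ q : Fin m → ℤ in cofinite, B < zN q := by
  rw [eventually_cofinite]
  refine (Set.Finite.pi' (fun _ : Fin m => Set.finite_Icc (-⌈B⌉) ⌈B⌉)).subset ?_
  intro q hq j
  have hq : ¬ B < zN q := hq
  have h1 := abs_le_zN q j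
  have h2 : |(q j : ℝ)| ≤ (⌈B⌉ : ℤ) := by
    have := Int.le_ceil B
    linarith
  rw [abs_le] at h2
  exact ⟨by exact_mod_cast h2.1, by exact_mod_cast h2.2⟩

/-- There are integers congruent to `1` modulo `e` near any real number. -/
lemma near_one_mod (e : ℕ) (he : 0 < e) (y : ℝ) :
    ∃ t : ℤ, |y + ((1 + e * t : ℤ) : ℝ)| ≤ e / 2 := by
  have he' : (0 : ℝ) < e := by exact_mod_cast he
  refine ⟨- round ((y + 1) / e), ?_⟩
  have h := abs_sub_round ((y + 1) / e)
  have h2 : y + ((1 + e * (- round ((y + 1) / e)) : ℤ) : ℝ)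
      = e * ((y + 1) / e - round ((y + 1) / e)) := by
    push_cast
    field_simp
    ring
  rw [h2, abs_mul, abs_of_pos he']
  nlinarith

/-- Weak bound on gaps between integers coprime to `q`. -/
lemma jacobsthal {m : ℕ} (ε : ℝ) (hε : 0 < ε) :
    ∀ᶠ q : Fin m → ℤ in cofinite, q ≠ 0 → ∀ y : ℝ, ∃ p : ℤ, ZCop p q ∧ |y + p| < ε * zN q := by
  obtain ⟨N, hN⟩ := exists_nat_gt (2 / ε)
  have hNε : 2 < N * ε := by rwa [div_lt_iff₀ hε] at hN
  filter_upwards [zN_large (m := m) ((N.factorial : ℝ) / ε)] with q hq hq0 y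
  rw [div_lt_iff₀ hε] at hq
  by_cases hP : ∃ P : ℕ, P.Prime ∧ N < P ∧ ∀ j, (P : ℤ) ∣ q j
  · obtain ⟨P, hP, hNP, hPq⟩ := hP
    obtain ⟨j0, hj0⟩ := Function.ne_iff.1 hq0
    have hj0 : q j0 ≠ 0 := hj0
    set d : ℕ := (q j0).natAbs with hd
    have hd0 : d ≠ 0 := by simpa [hd] using hj0
    have hPd : P ∣ d := by
      have := hPq j0
      rwa [Int.natCast_dvd] at this
    -- `e` is the `P`-free part of the coordinate
    set e : ℕ := ordCompl[P] d with he
    have he0 : 0 < e := Nat.ordCompl_pos P hd0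
    have hPe : ¬ P ∣ e := Nat.not_dvd_ordCompl hP hd0
    have hPe' : P * e ≤ d := by
      have h1 : ordProj[P] d * ordCompl[P] d = d := Nat.ordProj_mul_ordCompl_eq_self d P
      have h2 : P ≤ ordProj[P] d := by
        have : P ∣ ordProj[P] d := by
          apply dvd_pow_self
          exact (hP.factorization_pos_of_dvd hd0 hPd).ne'
        exact Nat.le_of_dvd (Nat.ordProj_pos d P) this
      calc P * e ≤ ordProj[P] d * ordCompl[P] d := Nat.mul_le_mul_right _ h2
        _ = d := h1
    have hdN : (d : ℝ) ≤ zN q := by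
      have := abs_le_zN q j0
      rw [hd, Nat.cast_natAbs]
      push_cast
      exact this
    obtain ⟨t, ht⟩ := near_one_mod e he0 y
    have hcop : ∀ s : ℤ, ¬ (P : ℤ) ∣ 1 + e * s → ZCop (1 + e * s) q := by
      intro s hs
      rw [zcop_iff]
      intro r hr hrp
      by_contra! hall
      have hrd : r ∣ d := by
        have := hall j0
        rwa [Int.natCast_dvd] at this
      have h1 : ordProj[P] d * ordCompl[P] d = d := Nat.ordProj_mul_ordCompl_eq_self d P
      rw [← h1] at hrd
      rcases (hr.dvd_mul).1 hrd with h | h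
      · have h3 := hr.dvd_of_dvd_pow h
        rw [(Nat.prime_dvd_prime_iff_eq hr hP).1 h3] at hrp
        exact hs hrp
      · have h4 : (r : ℤ) ∣ e := by exact_mod_cast h
        have h5 : (r : ℤ) ∣ 1 := (Int.dvd_add_left (h4.mul_right s)).1 hrp
        have : r ∣ 1 := by exact_mod_cast h5
        exact hr.one_lt.ne' (Nat.dvd_one.1 this)
    have hbd : 2 * (e : ℝ) < ε * zN q := by
      have h1 : (P : ℝ) * e ≤ d := by exact_mod_cast hPe'
      have h2 : (N : ℝ) < P := by exact_mod_cast hNP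
      have h3 : (0 : ℝ) < e := by exact_mod_cast he0
      have h4 : 2 * (e : ℝ) < (N * ε) * e := by nlinarith
      have h5 : (N * ε) * (e : ℝ) ≤ ε * (P * e) := by
        have : (N : ℝ) * (ε * e) ≤ P * (ε * e) := by gcongr
        linarith
      have h6 : ε * (P * e) ≤ ε * zN q := by
        gcongr
        linarith
      linarith
    have he0' : (0 : ℝ) < e := by exact_mod_cast he0
    by_cases hPt : (P : ℤ) ∣ 1 + e * t
    · refine ⟨1 + e * (t + 1), hcop _ ?_, ?_⟩
      · intro h
        have h2 : (P : ℤ) ∣ (1 + e * (t + 1)) - (1 + e * t) := dvd_sub h hPt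
        have h3 : (1 + (e : ℤ) * (t + 1)) - (1 + e * t) = e := by ring
        rw [h3] at h2
        exact hPe (by exact_mod_cast h2)
      · push_cast at ht ⊢
        rw [abs_le] at ht
        rw [abs_lt]
        constructor <;> nlinarith [ht.1, ht.2]
    · exact ⟨1 + e * t, hcop _ hPt, by linarith⟩
  · push Not at hP
    obtain ⟨t, ht⟩ := near_one_mod N.factorial (Nat.factorial_pos N) y
    refine ⟨1 + N.factorial * t, ?_, ?_⟩
    · rw [zcop_iff]
      intro r hr hrp
      by_cases hrN : N < r
      · exact hP r hr hrN
      · exfalso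
        have h4 : (r : ℤ) ∣ N.factorial := by
          exact_mod_cast Nat.dvd_factorial hr.pos (not_lt.1 hrN)
        have h5 : (r : ℤ) ∣ 1 := (Int.dvd_add_left (h4.mul_right t)).1 hrp
        have : r ∣ 1 := by exact_mod_cast h5
        exact hr.one_lt.ne' (Nat.dvd_one.1 this)
    · have : (0 : ℝ) < N.factorial := by exact_mod_cast Nat.factorial_pos N
      have h0 := zN_pos hq0
      linarith

/-- `x` lies in the strip attached to `q` with radius `r`. -/
def ZP {m : ℕ} (q : Fin m → ℤ) (r : ℝ) (x : Fin m → ℝ) : Prop :=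
  ∃ p : ℤ, ZCop p q ∧ |∑ j, (q j : ℝ) * x j + p| < r

/-- The limsup set of strips over `q ∈ G`. -/
def ZE {m : ℕ} (G : Set (Fin m → ℤ)) (r : (Fin m → ℤ) → ℝ) : Set (Fin m → ℝ) :=
  {x | {q | q ∈ G ∧ q ≠ 0 ∧ ZP q (r q) x}.Infinite}

lemma zp_A {m : ℕ} {l : ℕ} (hl : l.Prime) {q : Fin m → ℤ} (hq : ∃ j, ¬ (l : ℤ) ∣ q j)
    {r : ℝ} {x : Fin m → ℝ} (h : ZP q r x) : ZP q (l * r) ((l : ℝ) • x + 0) := by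
  obtain ⟨p, hp, hpr⟩ := h
  refine ⟨l * p, ?_, ?_⟩
  · rw [zcop_iff] at hp ⊢
    intro s hs hsp
    rcases (Nat.prime_iff_prime_int.1 hs).dvd_or_dvd hsp with h | h
    · rw [(Nat.prime_dvd_prime_iff_eq hs hl).1 (by exact_mod_cast h)]
      exact hq
    · exact hp s hs h
  · have h1 : ∑ j, (q j : ℝ) * (((l : ℝ) • x + 0) j) + ((l * p : ℤ) : ℝ)
        = l * (∑ j, (q j : ℝ) * x j + p) := by
      rw [mul_add, Finset.mul_sum]
      push_cast
      congr 1
      refine Finset.sum_congr rfl fun j _ => ?_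
      simp
      ring
    have hl0 : (0 : ℝ) < l := by exact_mod_cast hl.pos
    rw [h1, abs_mul, abs_of_pos hl0]
    gcongr

lemma zp_B {m : ℕ} {l : ℕ} (hl : l.Prime) {q : Fin m → ℤ} (hq : ∀ j, (l : ℤ) ∣ q j)
    (i : Fin m) (hi : ¬ (l : ℤ) ^ 2 ∣ q i)
    {r : ℝ} {x : Fin m → ℝ} (h : ZP q r x) :
    ZP q (l * r) ((l : ℝ) • x + Pi.single i ((l : ℝ)⁻¹)) := by
  obtain ⟨p, hp, hpr⟩ := h
  have hl0 : (0 : ℝ) < l := by exact_mod_cast hl.pos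
  choose q' hq' using hq
  have hi' : ¬ (l : ℤ) ∣ q' i := by
    rintro ⟨c, hc⟩
    exact hi ⟨c, by rw [hq', hc]; ring⟩
  refine ⟨l * p - q' i, ?_, ?_⟩
  · rw [zcop_iff] at hp ⊢
    intro s hs hsp
    by_contra! hall
    have hs' := Nat.prime_iff_prime_int.1 hs
    by_cases hsl : s = l
    · subst hsl
      exact hi' ((dvd_sub_right (dvd_mul_right _ _)).1 hsp)
    · have hsl' : ¬ (s : ℤ) ∣ l := by
        intro h
        exact hsl ((Nat.prime_dvd_prime_iff_eq hs hl).1 (by exact_mod_cast h))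
      have h1 : (s : ℤ) ∣ q' i := by
        have := hall i
        rw [hq'] at this
        exact (hs'.dvd_or_dvd this).resolve_left hsl'
      have h2 : (s : ℤ) ∣ l * p := (dvd_sub_left h1).1 hsp
      obtain ⟨j, hj⟩ := hp s hs ((hs'.dvd_or_dvd h2).resolve_left hsl')
      exact hj (hall j)
  · have h1 : ∑ j, (q j : ℝ) * (((l : ℝ) • x + Pi.single i ((l : ℝ)⁻¹) : Fin m → ℝ) j)
        + ((l * p - q' i : ℤ) : ℝ) = l * (∑ j, (q j : ℝ) * x j + p) := by
      have h2 : ∑ j, (q j : ℝ) * (((l : ℝ) • x + Pi.single i ((l : ℝ)⁻¹) : Fin m → ℝ) j)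
          = l * (∑ j, (q j : ℝ) * x j) + q' i := by
        simp only [Pi.add_apply, mul_add, Finset.sum_add_distrib, Pi.smul_apply, smul_eq_mul]
        congr 1
        · rw [Finset.mul_sum]
          refine Finset.sum_congr rfl fun j _ => ?_
          ring
        · simp only [Pi.single_apply, mul_ite, mul_zero, Finset.sum_ite_eq', Finset.mem_univ,
            if_true]
          rw [hq']
          push_cast
          field_simp
      rw [h2]
      push_cast
      ring
    rw [h1, abs_mul, abs_of_pos hl0]
    gcongr

lemma zp_C {m : ℕ} {l : ℕ} (hl : l.Prime) {q : Fin m → ℤ} (hq : ∀ j, (l : ℤ) ^ 2 ∣ q j)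
    (v : Fin m → ℤ) {r : ℝ} {x : Fin m → ℝ} (h : ZP q r x) :
    ZP q r (x + fun j => (v j : ℝ) / l) := by
  obtain ⟨p, hp, hpr⟩ := h
  have hl0 : (0 : ℝ) < l := by exact_mod_cast hl.pos
  choose q' hq' using hq
  refine ⟨p - ∑ j, l * q' j * v j, ?_, ?_⟩
  · rw [zcop_iff] at hp ⊢
    intro s hs hsp
    by_contra! hall
    have hs' := Nat.prime_iff_prime_int.1 hs
    have h1 : ∀ j, (s : ℤ) ∣ l * q' j := by
      intro j
      have := hall j
      rw [hq', pow_two, mul_assoc] at this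
      rcases hs'.dvd_or_dvd this with h | h
      · exact h.mul_right _
      · exact h
    have h2 : (s : ℤ) ∣ p :=
      (dvd_sub_left (Finset.dvd_sum fun j _ => (h1 j).mul_right (v j))).1 hsp
    obtain ⟨j, hj⟩ := hp s hs h2
    exact hj (hall j)
  · convert hpr using 2
    simp only [Pi.add_apply, mul_add, Finset.sum_add_distrib]
    push_cast
    have : ∑ j, (q j : ℝ) * ((v j : ℝ) / l) = ∑ j, (l : ℝ) * q' j * v j := by
      refine Finset.sum_congr rfl fun j _ => ?_
      rw [hq']
      push_cast
      field_simp
    rw [this]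
    ring

lemma zp_periodic {m : ℕ} {q : Fin m → ℤ} (v : Fin m → ℤ) {r : ℝ} {x : Fin m → ℝ}
    (h : ZP q r x) : ZP q r (x + fun j => (v j : ℝ)) := by
  obtain ⟨p, hp, hpr⟩ := h
  refine ⟨p - ∑ j, q j * v j, ?_, ?_⟩
  · rw [zcop_iff] at hp ⊢
    intro s hs hsp
    by_contra! hall
    have h2 : (s : ℤ) ∣ p :=
      (dvd_sub_left (Finset.dvd_sum fun j _ => (hall j).mul_right (v j))).1 hsp
    obtain ⟨j, hj⟩ := hp s hs h2
    exact hj (hall j)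
  · convert hpr using 2
    simp only [Pi.add_apply, mul_add, Finset.sum_add_distrib]
    push_cast
    ring

open Metric in
lemma zp_thickening {m : ℕ} {q : Fin m → ℤ} (hq : q ≠ 0) (r : ℝ) :
    {x | ZP q r x} = thickening (r / zN q)
      {y : Fin m → ℝ | ∃ p : ℤ, ZCop p q ∧ ∑ j, (q j : ℝ) * y j + p = 0} := by
  have hN := zN_pos hq
  ext x
  rw [mem_thickening_iff]
  constructor
  · rintro ⟨p, hp, hpr⟩
    set t := (∑ j, (q j : ℝ) * x j + p) / zN q with ht
    have htN : t * zN q = ∑ j, (q j : ℝ) * x j + p := by rw [ht]; field_simp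
    refine ⟨fun j => x j - t * SignType.sign (q j : ℝ), ⟨p, hp, ?_⟩, ?_⟩
    · simp only [mul_sub, Finset.sum_sub_distrib]
      have : ∑ j, (q j : ℝ) * (t * SignType.sign (q j : ℝ)) = t * zN q := by
        rw [zN, Finset.mul_sum]
        refine Finset.sum_congr rfl fun j _ => ?_
        rw [← self_mul_sign (q j : ℝ)]
        ring
      rw [this, htN]
      ring
    · have htr : |t| < r / zN q := by
        rw [ht, abs_div, abs_of_pos hN]
        gcongr
      rw [dist_pi_lt_iff (lt_of_le_of_lt (abs_nonneg _) htr)]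
      intro j
      refine lt_of_le_of_lt ?_ htr
      rw [Real.dist_eq, sub_sub_cancel, abs_mul]
      have : |((SignType.sign (q j : ℝ) : SignType) : ℝ)| ≤ 1 := by
        rcases SignType.sign (q j : ℝ) with _ | _ | _ <;> simp
      nlinarith [abs_nonneg t]
  · rintro ⟨z, ⟨p, hp, hz⟩, hd⟩
    refine ⟨p, hp, ?_⟩
    have h1 : ∑ j, (q j : ℝ) * x j + p = ∑ j, (q j : ℝ) * (x j - z j) := by
      simp only [mul_sub, Finset.sum_sub_distrib]
      linarith
    rw [h1]
    rw [lt_div_iff₀ hN] at hd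
    refine lt_of_le_of_lt ?_ hd
    refine (Finset.abs_sum_le_sum_abs _ _).trans ?_
    rw [zN, Finset.mul_sum]
    refine Finset.sum_le_sum fun j _ => ?_
    rw [abs_mul, mul_comm]
    gcongr
    exact dist_le_pi_dist x z j

lemma measurableSet_infinite {ι α : Type*} [Countable ι] [MeasurableSpace α] (Q : ι → α → Prop)
    (hQ : ∀ q, MeasurableSet {x | Q q x}) : MeasurableSet {x | {q | Q q x}.Infinite} := by
  have : {x | {q | Q q x}.Infinite} = ⋂ s : Finset ι, ⋃ q : ι, ⋃ _ : q ∉ s, {x | Q q x} := by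
    ext x
    simp only [Set.mem_iInter, Set.mem_iUnion]
    constructor
    · intro h s
      obtain ⟨q, hq, hqs⟩ := Set.Infinite.exists_notMem_finset h s
      exact ⟨q, hqs, hq⟩
    · intro h hfin
      obtain ⟨q, hqs, hq⟩ := h hfin.toFinset
      exact hqs (hfin.mem_toFinset.2 hq)
  rw [this]
  refine MeasurableSet.iInter fun s => MeasurableSet.iUnion fun q => MeasurableSet.iUnion fun _ => ?_
  exact hQ q

lemma measurableSet_ZE {m : ℕ} (G : Set (Fin m → ℤ)) (r : (Fin m → ℤ) → ℝ) :
    MeasurableSet (ZE G r) := by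
  refine measurableSet_infinite _ fun q => ?_
  by_cases h : q ∈ G ∧ q ≠ 0
  · have : {x | q ∈ G ∧ q ≠ 0 ∧ ZP q (r q) x} = {x | ZP q (r q) x} := by
      ext x
      simp [h.1, h.2]
    rw [this, zp_thickening h.2]
    exact Metric.isOpen_thickening.measurableSet
  · have : {x | q ∈ G ∧ q ≠ 0 ∧ ZP q (r q) x} = ∅ := by
      ext x
      simp only [Set.mem_ofPred_eq, Set.mem_empty_iff_false, iff_false]
      tauto
    rw [this]
    exact MeasurableSet.empty

open Topology in
lemma ZE_scale {m : ℕ} (hm : 1 ≤ m) (G : Set (Fin m → ℤ)) (r : (Fin m → ℤ) → ℝ)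
    (hr : Tendsto (fun q => r q / zN q) cofinite (𝓝 0)) {M : ℝ} (hM : 0 < M) :
    ZE G (fun q => M * r q) =ᵐ[volume] ZE G r := by
  haveI : Nonempty (Fin m) := ⟨⟨0, hm⟩⟩
  obtain ⟨⟨e⟩⟩ : Nonempty (ℕ ≃ (Fin m → ℤ)) ∧ True := by
    obtain ⟨D⟩ := nonempty_denumerable (Fin m → ℤ)
    exact ⟨⟨(Denumerable.eqv _).symm⟩, trivial⟩
  have key : ∀ r : (Fin m → ℤ) → ℝ, ZE G r = blimsup (fun k => Metric.thickening
      (r (e k) / zN (e k)) {y : Fin m → ℝ | ∃ p : ℤ, ZCop p (e k) ∧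
        ∑ j, (e k j : ℝ) * y j + p = 0}) atTop (fun k => e k ∈ G ∧ e k ≠ 0) := by
    intro r
    ext x
    rw [blimsup_eq_limsup, mem_limsup_iff_frequently_mem, frequently_inf_principal,
      ← Nat.cofinite_eq_atTop, frequently_cofinite_iff_infinite]
    have : {q | q ∈ G ∧ q ≠ 0 ∧ ZP q (r q) x} = e '' {k | k ∈ {k | e k ∈ G ∧ e k ≠ 0} ∧
        x ∈ Metric.thickening (r (e k) / zN (e k)) {y : Fin m → ℝ | ∃ p : ℤ, ZCop p (e k) ∧
        ∑ j, (e k j : ℝ) * y j + p = 0}} := by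
      ext q
      simp only [Set.mem_image, Set.mem_ofPred_eq]
      constructor
      · rintro ⟨h1, h2, h3⟩
        refine ⟨e.symm q, ?_, by simp⟩
        rw [e.apply_symm_apply]
        refine ⟨⟨h1, h2⟩, ?_⟩
        rw [← zp_thickening h2]
        exact h3
      · rintro ⟨k, ⟨⟨h1, h2⟩, h3⟩, rfl⟩
        rw [← zp_thickening h2] at h3
        exact ⟨h1, h2, h3⟩
    change ({q | q ∈ G ∧ q ≠ 0 ∧ ZP q (r q) x}).Infinite ↔ _
    rw [this, Set.infinite_image_iff e.injective.injOn]
  rw [key, key]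
  have hr' : Tendsto (fun k => r (e k) / zN (e k)) atTop (𝓝 0) := by
    rw [← Nat.cofinite_eq_atTop]
    exact hr.comp e.injective.tendsto_cofinite
  have := blimsup_thickening_mul_ae_eq (volume : Measure (Fin m → ℝ))
    (fun k => e k ∈ G ∧ e k ≠ 0) (fun k => {y : Fin m → ℝ | ∃ p : ℤ, ZCop p (e k) ∧
        ∑ j, (e k j : ℝ) * y j + p = 0}) hM _ hr'
  simpa only [mul_div_assoc] using this

open Topology in
lemma ZE_zol_expand {m : ℕ} (hm : 1 ≤ m) (G : Set (Fin m → ℤ)) (r : (Fin m → ℤ) → ℝ)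
    (hr : Tendsto (fun q => r q / zN q) cofinite (𝓝 0)) {l : ℕ} (hl : l.Prime) (w : Fin m → ℝ)
    (hG : ∀ q ∈ G, ∀ s x, ZP q s x → ZP q (l * s) ((l : ℝ) • x + w)) :
    volume (ZE G r) = 0 ∨ volume (ZE G r)ᶜ = 0 := by
  have hl1 : (1 : ℝ) < l := by exact_mod_cast hl.one_lt
  have hl0 : (0 : ℝ) < l := by linarith
  set F : Set (Fin m → ℝ) := ⋃ k : ℕ, ZE G (fun q => (l : ℝ) ^ k * r q) with hF
  have hFm : MeasurableSet F := MeasurableSet.iUnion fun k => measurableSet_ZE _ _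
  have hFe : F =ᵐ[volume] ZE G r := by
    have h1 : F =ᵐ[volume] ⋃ _ : ℕ, ZE G r :=
      EventuallyEq.countable_iUnion fun k => ZE_scale hm G r hr (by positivity)
    rwa [Set.iUnion_const] at h1
  have hz := zol_expand hFm ?_ (l : ℝ) hl1 w ?_
  · rcases hz with h | h
    · left
      rwa [← measure_congr hFe]
    · right
      rwa [← measure_congr hFe.compl]
  · intro z x hx
    obtain ⟨k, hk⟩ := Set.mem_iUnion.1 hx
    refine Set.mem_iUnion.2 ⟨k, ?_⟩
    exact Set.Infinite.mono (fun q hq => ⟨hq.1, hq.2.1, zp_periodic z hq.2.2⟩) hk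
  · intro x hx
    obtain ⟨k, hk⟩ := Set.mem_iUnion.1 hx
    refine Set.mem_iUnion.2 ⟨k + 1, ?_⟩
    refine Set.Infinite.mono (fun q hq => ⟨hq.1, hq.2.1, ?_⟩) hk
    have := hG q hq.1 _ _ hq.2.2
    rwa [← mul_assoc, ← pow_succ'] at this

open Topology in
lemma ZE_zol {m : ℕ} (hm : 1 ≤ m) (r : (Fin m → ℤ) → ℝ)
    (hr : Tendsto (fun q => r q / zN q) cofinite (𝓝 0)) :
    volume (ZE Set.univ r) = 0 ∨ volume (ZE Set.univ r)ᶜ = 0 := by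
  set A : ℕ → Set (Fin m → ℤ) := fun l => {q | ∃ j, ¬ (l : ℤ) ∣ q j} with hA
  set B : ℕ → Fin m → Set (Fin m → ℤ) :=
    fun l i => {q | (∀ j, (l : ℤ) ∣ q j) ∧ ¬ (l : ℤ) ^ 2 ∣ q i} with hB
  set C : ℕ → Set (Fin m → ℤ) := fun l => {q | ∀ j, (l : ℤ) ^ 2 ∣ q j} with hC
  have hmono : ∀ G, ZE G r ⊆ ZE Set.univ r := fun G x hx =>
    Set.Infinite.mono (fun q hq => ⟨trivial, hq.2⟩) hx
  by_cases hfull : ∃ G, volume (ZE G r)ᶜ = 0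
  · obtain ⟨G, hG⟩ := hfull
    right
    exact measure_mono_null (Set.compl_subset_compl.2 (hmono G)) hG
  push Not at hfull
  have hA0 : ∀ l : ℕ, l.Prime → volume (ZE (A l) r) = 0 := fun l hl =>
    (ZE_zol_expand hm (A l) r hr hl 0 fun q hq s x h => zp_A hl hq h).resolve_right (hfull _)
  have hB0 : ∀ l : ℕ, l.Prime → ∀ i, volume (ZE (B l i) r) = 0 := fun l hl i =>
    (ZE_zol_expand hm (B l i) r hr hl _ fun q hq s x h =>
      zp_B hl hq.1 i hq.2 h).resolve_right (hfull _)
  have hEC : ∀ l : ℕ, l.Prime → ∀ᵐ x, x ∈ ZE Set.univ r → x ∈ ZE (C l) r := by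
    intro l hl
    have h1 : ∀ᵐ x, x ∉ ZE (A l) r := measure_eq_zero_iff_ae_notMem.1 (hA0 l hl)
    have h2 : ∀ᵐ x, ∀ i, x ∉ ZE (B l i) r :=
      ae_all_iff.2 fun i => measure_eq_zero_iff_ae_notMem.1 (hB0 l hl i)
    filter_upwards [h1, h2] with x hx1 hx2 hx hc
    have f1 : {q | q ∈ A l ∧ q ≠ 0 ∧ ZP q (r q) x}.Finite := Set.not_infinite.1 hx1
    have f2 : (⋃ i, {q | q ∈ B l i ∧ q ≠ 0 ∧ ZP q (r q) x}).Finite :=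
      Set.finite_iUnion fun i => Set.not_infinite.1 (hx2 i)
    have f3 : {q | q ∈ C l ∧ q ≠ 0 ∧ ZP q (r q) x}.Finite := hc
    refine hx (((f1.union f2).union f3).subset ?_)
    rintro q ⟨-, hq0, hq⟩
    by_cases ha : q ∈ A l
    · exact Or.inl (Or.inl ⟨ha, hq0, hq⟩)
    by_cases hcq : q ∈ C l
    · exact Or.inr ⟨hcq, hq0, hq⟩
    left; right
    simp only [hA, hC, Set.mem_ofPred_eq, not_exists, not_not, not_forall] at ha hcq
    obtain ⟨i, hi⟩ := hcq
    exact Set.mem_iUnion.2 ⟨i, ⟨ha, hi⟩, hq0, hq⟩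
  refine zol_dense volume (measurableSet_ZE _ _) ?_
  -- invariance under `1/l` translations
  have hinv : ∀ l : ℕ, l.Prime → ∀ v : Fin m → ℤ, ∀ᵐ x,
      x ∈ ZE Set.univ r → x + (fun j => (v j : ℝ) / l) ∈ ZE Set.univ r := by
    intro l hl v
    filter_upwards [hEC l hl] with x hx hx'
    exact hmono (C l) (Set.Infinite.mono (fun q hq => ⟨hq.1, hq.2.1, zp_C hl hq.1 v hq.2.2⟩)
      (hx hx'))
  rw [Metric.dense_iff]
  intro x ε hε
  obtain ⟨N, hN⟩ := exists_nat_gt (1 / ε)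
  obtain ⟨l, hlN, hl⟩ := Nat.exists_infinite_primes N
  have hl0 : (0 : ℝ) < l := by exact_mod_cast hl.pos
  refine ⟨fun j => ((round (x j * l) : ℤ) : ℝ) / l, ?_, hinv l hl fun j => round (x j * l)⟩
  rw [Metric.mem_ball, dist_pi_lt_iff hε]
  intro j
  have h1 := abs_sub_round (x j * l)
  have h2 : ((round (x j * l) : ℤ) : ℝ) / l - x j = - (x j * l - round (x j * l)) / l := by
    field_simp
    ring
  rw [Real.dist_eq, h2, abs_div, abs_neg, abs_of_pos hl0, div_lt_iff₀ hl0]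
  have h3 : (N : ℝ) ≤ l := by exact_mod_cast hlN
  have h4 : 1 / ε < l := by linarith
  rw [div_lt_iff₀ hε] at h4
  linarith

open Topology in
/-- Zero-one law for one linear form, with extended radii. -/
lemma one_form_zol {m : ℕ} (hm : 1 ≤ m) (R : (Fin m → ℤ) → ENNReal) (F : Set (Fin m → ℝ))
    (hF : F = {x | {q : Fin m → ℤ | q ≠ 0 ∧ ∃ p : ℤ, ZCop p q ∧
      ENNReal.ofReal |∑ j, (q j : ℝ) * x j + p| < R q}.Infinite}) :
    volume F = 0 ∨ volume Fᶜ = 0 := by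
  by_cases hbig : ∃ ε : ℝ, 0 < ε ∧ {q | q ≠ 0 ∧ ENNReal.ofReal (ε * zN q) ≤ R q}.Infinite
  · obtain ⟨ε, hε, hinf⟩ := hbig
    right
    have : F = Set.univ := by
      rw [hF, Set.eq_univ_iff_forall]
      intro x
      have h1 := jacobsthal (m := m) ε hε
      rw [eventually_cofinite] at h1
      refine (hinf.diff h1).mono ?_
      rintro q ⟨⟨hq0, hq⟩, hq2⟩
      simp only [Set.mem_ofPred_eq, not_not] at hq2
      obtain ⟨p, hp, hpr⟩ := hq2 hq0 (∑ j, (q j : ℝ) * x j)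
      refine ⟨hq0, p, hp, lt_of_lt_of_le ?_ hq⟩
      exact (ENNReal.ofReal_lt_ofReal_iff (lt_of_le_of_lt (abs_nonneg _) hpr)).2 hpr
    simp [this]
  push Not at hbig
  have hsmall : ∀ ε : ℝ, 0 < ε → ∀ᶠ q : Fin m → ℤ in cofinite,
      q ≠ 0 ∧ R q < ENNReal.ofReal (ε * zN q) := by
    intro ε hε
    have h1 : ∀ᶠ q : Fin m → ℤ in cofinite, q ≠ 0 := by
      rw [eventually_cofinite]
      simp
    have h2 := hbig ε hε
    have h2 := h2.eventually_cofinite_notMem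
    filter_upwards [h1, h2] with q h1 h2
    refine ⟨h1, ?_⟩
    by_contra h
    exact h2 ⟨h1, not_lt.1 h⟩
  have hr : Tendsto (fun q => (R q).toReal / zN q) cofinite (𝓝 0) := by
    rw [Metric.tendsto_nhds]
    intro ε hε
    filter_upwards [hsmall ε hε] with q hq
    have hN := zN_pos hq.1
    rw [Real.dist_eq, sub_zero, abs_of_nonneg (by positivity), div_lt_iff₀ hN]
    exact ENNReal.toReal_lt_of_lt_ofReal hq.2
  have hE : F = ZE Set.univ (fun q => (R q).toReal) := by
    have h1 := hsmall 1 one_pos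
    rw [hF]
    ext x
    have : ∀ᶠ q : Fin m → ℤ in cofinite, (q ≠ 0 ∧ ∃ p : ℤ, ZCop p q ∧
      ENNReal.ofReal |∑ j, (q j : ℝ) * x j + p| < R q) ↔
      (q ∈ Set.univ ∧ q ≠ 0 ∧ ZP q (R q).toReal x) := by
      filter_upwards [h1] with q hq
      have hRt : R q ≠ ⊤ := (hq.2.trans_le le_top).ne
      simp only [ZP, Set.mem_univ, true_and]
      simp only [ENNReal.ofReal_lt_iff_lt_toReal (abs_nonneg _) hRt]
    change Set.Infinite _ ↔ Set.Infinite _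
    rw [← frequently_cofinite_iff_infinite, ← frequently_cofinite_iff_infinite]
    exact frequently_congr this
  rw [hE]
  exact ZE_zol hm _ hr

/-- Insert a column vector as the `i`-th column of a zero matrix. -/
def zcol (m n : ℕ) (i : Fin n) : (Fin m → ℝ) →ₗ[ℝ] (Fin m → Fin n → ℝ) where
  toFun z := fun j => Pi.single i (z j)
  map_add' x y := by
    ext j k
    simp [Pi.single_apply]
    split_ifs <;> simp
  map_smul' c x := by
    ext j k
    simp [Pi.single_apply]

/-- The multiplicative condition for `q`. -/
def ZQ {m n : ℕ} (Ψ : (Fin m → ℤ) → ℝ) (q : Fin m → ℤ) (X : Fin m → Fin n → ℝ) : Prop :=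
  q ≠ 0 ∧ ∃ p : Fin n → ℤ, (∀ i, ZCop (p i) q) ∧
    ∏ i, |(∑ j, (q j : ℝ) * X j i) + (p i : ℝ)| < Ψ q

lemma measurableSet_ZQ {m n : ℕ} (Ψ : (Fin m → ℤ) → ℝ) (q : Fin m → ℤ) :
    MeasurableSet {X : Fin m → Fin n → ℝ | ZQ Ψ q X} := by
  refine IsOpen.measurableSet ?_
  have : {X : Fin m → Fin n → ℝ | ZQ Ψ q X} = ⋃ p : Fin n → ℤ, ⋃ _ : q ≠ 0 ∧ ∀ i, ZCop (p i) q,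
      {X | ∏ i, |(∑ j, (q j : ℝ) * X j i) + (p i : ℝ)| < Ψ q} := by
    ext X
    simp only [ZQ, Set.mem_ofPred_eq, Set.mem_iUnion, exists_prop]
    constructor
    · rintro ⟨h, p, hp, h3⟩
      exact ⟨p, ⟨h, hp⟩, h3⟩
    · rintro ⟨p, ⟨h, hp⟩, h3⟩
      exact ⟨h, p, hp, h3⟩
  rw [this]
  refine isOpen_iUnion fun p => isOpen_iUnion fun _ => ?_
  exact isOpen_lt (by fun_prop) continuous_const

lemma fibre_zol {m n : ℕ} (hm : 1 ≤ m) (Ψ : (Fin m → ℤ) → ℝ) (i : Fin n)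
    (X : Fin m → Fin n → ℝ) :
    volume {z : Fin m → ℝ | {q | ZQ Ψ q (X + zcol m n i z)}.Infinite} = 0 ∨
    volume {z : Fin m → ℝ | {q | ZQ Ψ q (X + zcol m n i z)}.Infinite}ᶜ = 0 := by
  set c : (Fin m → ℤ) → (Fin n → ℤ) → ℝ := fun q p =>
    ∏ k ∈ Finset.univ.erase i, |(∑ j, (q j : ℝ) * X j k) + (p k : ℝ)| with hc
  have hc0 : ∀ q p, 0 ≤ c q p := fun q p => Finset.prod_nonneg fun k _ => abs_nonneg _
  set R : (Fin m → ℤ) → ENNReal := fun q => ⨆ p : Fin n → ℤ, ⨆ _ : ∀ k, ZCop (p k) q,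
    ENNReal.ofReal (Ψ q) / ENNReal.ofReal (c q p) with hR
  have hz := one_form_zol hm R _ rfl
  set F0 : Set (Fin m → ℝ) := {x | {q : Fin m → ℤ | q ≠ 0 ∧ ∃ p : ℤ, ZCop p q ∧
      ENNReal.ofReal |∑ j, (q j : ℝ) * x j + p| < R q}.Infinite} with hF0
  have hmul : ∀ (t : ℝ) (q : Fin m → ℤ) (p : Fin n → ℤ), 0 ≤ t → (t * c q p < Ψ q ↔
      ENNReal.ofReal t < ENNReal.ofReal (Ψ q) / ENNReal.ofReal (c q p)) := by
    intro t q p ht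
    rw [ENNReal.lt_div_iff_mul_lt (Or.inr ENNReal.ofReal_ne_top) (Or.inl ENNReal.ofReal_ne_top),
      ← ENNReal.ofReal_mul ht,
      ENNReal.ofReal_lt_ofReal_iff_of_nonneg (mul_nonneg ht (hc0 q p))]
  have heq : {z : Fin m → ℝ | {q | ZQ Ψ q (X + zcol m n i z)}.Infinite} =
      (fun z => z + fun j => X j i) ⁻¹' F0 := by
    ext z
    change Set.Infinite _ ↔ Set.Infinite _
    have hcol : ∀ (q : Fin m → ℤ) (p : Fin n → ℤ),
        ∏ k, |(∑ j, (q j : ℝ) * (X + zcol m n i z) j k) + (p k : ℝ)| =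
        |∑ j, (q j : ℝ) * ((z + fun j => X j i : Fin m → ℝ) j) + p i| * c q p := by
      intro q p
      rw [← Finset.mul_prod_erase _ _ (Finset.mem_univ i)]
      congr 1
      · congr 2
        refine Finset.sum_congr rfl fun j _ => ?_
        simp [zcol, add_comm]
      · refine Finset.prod_congr rfl fun k hk => ?_
        have hki : k ≠ i := Finset.ne_of_mem_erase hk
        congr 2
        refine Finset.sum_congr rfl fun j _ => ?_
        simp [zcol, Pi.single_apply, hki]
    have : {q | ZQ Ψ q (X + zcol m n i z)} = {q : Fin m → ℤ | q ≠ 0 ∧ ∃ p : ℤ, ZCop p q ∧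
      ENNReal.ofReal |∑ j, (q j : ℝ) * ((z + fun j => X j i : Fin m → ℝ) j) + p| < R q} := by
      ext q
      simp only [ZQ, Set.mem_ofPred_eq, hcol]
      refine and_congr_right fun _ => ?_
      constructor
      · rintro ⟨p, hp, hlt⟩
        refine ⟨p i, hp i, ?_⟩
        rw [hmul _ _ _ (abs_nonneg _)] at hlt
        simp only [hR, lt_iSup_iff]
        exact ⟨p, hp, hlt⟩
      · rintro ⟨s, hs, hlt⟩
        simp only [hR, lt_iSup_iff] at hlt
        obtain ⟨p, hp, hlt⟩ := hlt
        rw [← hmul _ _ _ (abs_nonneg _)] at hlt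
        refine ⟨Function.update p i s, ?_, ?_⟩
        · intro k
          by_cases hk : k = i
          · subst hk; simpa using hs
          · simpa [hk] using hp k
        · have : c q (Function.update p i s) = c q p := by
            refine Finset.prod_congr rfl fun k hk => ?_
            have hki : k ≠ i := Finset.ne_of_mem_erase hk
            simp [hki]
          rw [this]
          simpa using hlt
    rw [this]
  rw [heq, ← Set.preimage_compl, measure_preimage_add_right, measure_preimage_add_right]
  exact hz

lemma matrix_zol {m n : ℕ} (hm : 1 ≤ m) (Ψ : (Fin m → ℤ) → ℝ)
    (F : Set (Fin m → Fin n → ℝ)) (hF : F = {X | {q | ZQ Ψ q X}.Infinite}) :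
    MeasurableSet F ∧ (volume F = 0 ∨ volume Fᶜ = 0) := by
  have hFm : MeasurableSet F := by
    rw [hF]
    exact measurableSet_infinite _ fun q => measurableSet_ZQ Ψ q
  refine ⟨hFm, ?_⟩
  set S : Set (Fin m → Fin n → ℝ) := {v | ∀ᵐ x, x ∈ F → x + v ∈ F} with hS
  have hadd : ∀ a b, a ∈ S → b ∈ S → a + b ∈ S := by
    intro a b ha hb
    have h1 : ∀ᵐ x, x + a ∈ F → x + a + b ∈ F :=
      (measurePreserving_add_right volume a).quasiMeasurePreserving.ae hb
    have ha : ∀ᵐ x, x ∈ F → x + a ∈ F := ha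
    change ∀ᵐ x, x ∈ F → x + (a + b) ∈ F
    filter_upwards [ha, h1] with x h2 h3 hx
    rw [← add_assoc]
    exact h3 (h2 hx)
  have hzero : (0 : Fin m → Fin n → ℝ) ∈ S := by
    change ∀ᵐ x, x ∈ F → x + 0 ∈ F
    simp
  have hcol : ∀ i v, zcol m n i v ∈ S := by
    intro i v
    have hms : MeasurableSet {X | X ∈ F → X + zcol m n i v ∈ F} := by
      have : {X | X ∈ F → X + zcol m n i v ∈ F} =
          Fᶜ ∪ (fun X => X + zcol m n i v) ⁻¹' F := by
        ext X
        simp [imp_iff_not_or]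
      rw [this]
      exact hFm.compl.union (hFm.preimage (measurable_add_const _))
    refine ae_mem_of_ae_add_linearMap_mem (zcol m n i) volume volume hms ?_
    intro X
    rcases fibre_zol hm Ψ i X with h | h
    · have h1 := measure_eq_zero_iff_ae_notMem.1 h
      filter_upwards [h1] with z hz hz'
      exfalso
      rw [hF] at hz'
      exact hz hz'
    · have h1 : ∀ᵐ z : Fin m → ℝ, {q | ZQ Ψ q (X + zcol m n i z)}.Infinite := h
      have h2 : ∀ᵐ z : Fin m → ℝ, {q | ZQ Ψ q (X + zcol m n i (z + v))}.Infinite :=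
        (measurePreserving_add_right volume v).quasiMeasurePreserving.ae h1
      filter_upwards [h2] with z hz _
      rw [hF, add_assoc, ← map_add]
      exact hz
  have hall : S = Set.univ := by
    rw [Set.eq_univ_iff_forall]
    intro V
    have hV : V = ∑ i, zcol m n i (fun j => V j i) := by
      ext j k
      simp [zcol, Finset.sum_apply, Pi.single_apply]
    rw [hV]
    exact Finset.sum_induction _ (· ∈ S) hadd hzero fun i _ => hcol i _
  refine zol_dense volume hFm ?_
  change Dense S
  rw [hall]
  exact dense_univ

lemma ae_nonint {m n : ℕ} (q : Fin m → ℤ) (hq : q ≠ 0) (k : Fin n) (p : ℤ) :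
    ∀ᵐ X : Fin m → Fin n → ℝ, ∑ j, (q j : ℝ) * X j k + p ≠ 0 := by
  obtain ⟨j0, hj0⟩ := Function.ne_iff.1 hq
  have hj0 : (q j0 : ℝ) ≠ 0 := by exact_mod_cast hj0
  have hms : MeasurableSet {X : Fin m → Fin n → ℝ | ∑ j, (q j : ℝ) * X j k + p ≠ 0} := by
    refine IsOpen.measurableSet ?_
    exact isOpen_ne_fun (by fun_prop) continuous_const
  set L : ℝ →ₗ[ℝ] (Fin m → Fin n → ℝ) :=
    (zcol m n k).comp (LinearMap.single ℝ (fun _ : Fin m => ℝ) j0) with hL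
  refine ae_mem_of_ae_add_linearMap_mem L volume volume hms ?_
  intro X
  have h1 : ∀ᵐ t : ℝ, t ≠ -(∑ j, (q j : ℝ) * X j k + p) / q j0 := by
    simp [ae_iff]
  filter_upwards [h1] with t ht h
  apply ht
  have h2 : ∑ j, (q j : ℝ) * (X + L t) j k = ∑ j, (q j : ℝ) * X j k + q j0 * t := by
    simp only [Pi.add_apply, mul_add, Finset.sum_add_distrib]
    congr 1
    simp [hL, zcol, Pi.single_apply]
  rw [h2] at h
  rw [eq_div_iff hj0]
  linarith

lemma finite_p {n : ℕ} (a : Fin n → ℝ) (ha : ∀ k (p : ℤ), a k + p ≠ 0) (B : ℝ) :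
    {p : Fin n → ℤ | ∏ i, |a i + (p i : ℝ)| < B}.Finite := by
  set δ : Fin n → ℝ := fun k => |a k - round (a k)| with hδ
  have hδ0 : ∀ k, 0 < δ k := by
    intro k
    have := ha k (- round (a k))
    rw [hδ, abs_pos]
    simpa [← sub_eq_add_neg] using this
  have hle : ∀ k (p : ℤ), δ k ≤ |a k + p| := by
    intro k p
    have := round_le (a k) (-p)
    simpa using this
  set D : Fin n → ℝ := fun i => ∏ k ∈ Finset.univ.erase i, δ k with hD
  have hD0 : ∀ i, 0 < D i := fun i => Finset.prod_pos fun k _ => hδ0 k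
  refine (Set.Finite.pi' (fun i : Fin n =>
    Set.finite_Icc (-⌈B / D i + |a i|⌉) ⌈B / D i + |a i|⌉)).subset ?_
  intro p hp i
  have hp : ∏ i, |a i + (p i : ℝ)| < B := hp
  rw [← Finset.mul_prod_erase _ _ (Finset.mem_univ i)] at hp
  have h1 : D i ≤ ∏ k ∈ Finset.univ.erase i, |a k + (p k : ℝ)| :=
    Finset.prod_le_prod (fun k _ => (hδ0 k).le) fun k _ => hle k (p k)
  have h2 : |a i + p i| * D i < B :=
    lt_of_le_of_lt (mul_le_mul_of_nonneg_left h1 (abs_nonneg _)) hp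
  have h3 : |a i + p i| < B / D i := by rwa [lt_div_iff₀ (hD0 i)]
  have h4 : |(p i : ℝ)| ≤ (⌈B / D i + |a i|⌉ : ℤ) := by
    have h5 := Int.le_ceil (B / D i + |a i|)
    have h6 : |(p i : ℝ)| ≤ |a i + p i| + |a i| := by
      have := abs_sub (a i + p i) (a i)
      simpa using this
    linarith
  rw [abs_le] at h4
  exact ⟨by exact_mod_cast h4.1, by exact_mod_cast h4.2⟩

/-- Zero-one law for the multiplicative linear forms set with coprimality: for
any `m, n ≥ 1` and any non-negative `Ψ : ℤ^m → [0,∞)`, the `mn`-dimensional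
Lebesgue measure of `D^×_{m,n}(Ψ)` is either 0 or 1. -/
theorem linear_forms_zero_one_law_D (m n : ℕ) (hm : 1 ≤ m) (hn : 1 ≤ n)
    (Ψ : (Fin m → ℤ) → ℝ) (hΨ : ∀ q, 0 ≤ Ψ q) :
    volume (DmulLF m n Ψ) = 0 ∨ volume (DmulLF m n Ψ) = 1 := by
  set F : Set (Fin m → Fin n → ℝ) := {X | {q | ZQ Ψ q X}.Infinite} with hF
  set I : Set (Fin m → Fin n → ℝ) := {X | ∀ j i, X j i ∈ Set.Icc (0 : ℝ) 1} with hI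
  obtain ⟨hFm, hz⟩ := matrix_zol hm Ψ F hF
  have hIvol : volume I = 1 := by
    have : I = Set.pi Set.univ fun _ : Fin m => Set.pi Set.univ fun _ : Fin n =>
        Set.Icc (0 : ℝ) 1 := by
      ext X
      simp only [hI, Set.mem_pi, Set.mem_univ, true_imp_iff, Set.mem_ofPred_eq]
    have h1 : volume (Set.pi Set.univ fun _ : Fin n => Set.Icc (0 : ℝ) 1) = 1 := by
      rw [volume_pi_pi]
      simp
    rw [this, volume_pi_pi, h1]
    simp
  have hgen : ∀ᵐ X : Fin m → Fin n → ℝ, ∀ q : Fin m → ℤ, q ≠ 0 → ∀ (k : Fin n) (p : ℤ),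
      ∑ j, (q j : ℝ) * X j k + p ≠ 0 := by
    refine ae_all_iff.2 fun q => ?_
    by_cases hq : q = 0
    · simp [hq]
    · have : ∀ᵐ X : Fin m → Fin n → ℝ, ∀ (k : Fin n) (p : ℤ),
          ∑ j, (q j : ℝ) * X j k + p ≠ 0 :=
        ae_all_iff.2 fun k => ae_all_iff.2 fun p => ae_nonint q hq k p
      filter_upwards [this] with X hX _ using hX
  have hDF : DmulLF m n Ψ =ᵐ[volume] (I ∩ F : Set (Fin m → Fin n → ℝ)) := by
    refine eventuallyEq_set.2 ?_
    filter_upwards [hgen] with X hX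
    refine and_congr_right fun _ => ?_
    set T : Set ((Fin n → ℤ) × (Fin m → ℤ)) := {pq | pq.2 ≠ 0 ∧
      (∀ i, Int.gcd (pq.1 i) (Finset.univ.gcd fun j => pq.2 j) = 1) ∧
      ∏ i, |(∑ j, (pq.2 j : ℝ) * X j i) + (pq.1 i : ℝ)| < Ψ pq.2} with hT
    have himg : {q | ZQ Ψ q X} = Prod.snd '' T := by
      ext q
      simp only [Set.mem_image, Set.mem_ofPred_eq, ZQ, ZCop, hT, Prod.exists]
      constructor
      · rintro ⟨h0, p, hp, h⟩
        exact ⟨p, q, ⟨h0, hp, h⟩, rfl⟩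
      · rintro ⟨p, q, ⟨h0, hp, h⟩, rfl⟩
        exact ⟨h0, p, hp, h⟩
    change T.Infinite ↔ {q | ZQ Ψ q X}.Infinite
    constructor
    · intro hTinf hfin
      refine hTinf ?_
      refine Set.Finite.of_finite_fibers Prod.snd (by rwa [← himg]) ?_
      rintro q -
      by_cases hq : q = 0
      · refine Set.Finite.subset Set.finite_empty ?_
        rintro ⟨p, q'⟩ ⟨⟨h0, -⟩, h⟩
        exact h0 ((show q' = q from h).trans hq)
      · refine ((finite_p (fun i => ∑ j, (q j : ℝ) * X j i) (hX q hq) (Ψ q)).image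
          (fun p => (p, q))).subset ?_
        rintro ⟨p, q'⟩ ⟨⟨h0, -, h1⟩, h⟩
        have h : q' = q := h
        subst h
        exact ⟨p, h1, rfl⟩
    · intro h
      rw [himg] at h
      exact h.of_image _
  rw [measure_congr hDF]
  rcases hz with h | h
  · left
    exact measure_mono_null Set.inter_subset_right h
  · right
    rw [measure_inter_conull h, hIvol]
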